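/- arXiv:1209.3494 — 2 statements merged into one kernel-verified Lean document; each statement's English description precedes it below -/
import Mathlib

section
/- Let 0 < p < 1 and let α, β be real numbers with α ≥ β > 0 and α² + β² = 1. Then the fidelity (fully entangled fraction) of the two-qubit state ρ(χ(α), Λ_p) obtained by sending the second qubit of |χ(α)⟩ = α|00⟩ + β|11⟩ through the amplitude damping channel Λ_p equals F(ρ(χ(α), Λ_p)) = (1 + 2αβ√(1−p) − pβ²)/2. -/
open Matrix Complex
open scoped Kronecker ComplexOrder

/-- Index type for two qubits: the product basis of ℂ² ⊗ ℂ². -/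
abbrev Q2 := Fin 2 × Fin 2

/-- Kraus operator `M₀` of the amplitude damping channel. -/
noncomputable def M0 (p : ℝ) : Matrix (Fin 2) (Fin 2) ℂ :=
  !![1, 0; 0, (Real.sqrt (1 - p) : ℂ)]

/-- Kraus operator `M₁` of the amplitude damping channel. -/
noncomputable def M1 (p : ℝ) : Matrix (Fin 2) (Fin 2) ℂ :=
  !![0, (Real.sqrt p : ℂ); 0, 0]

/-- Outer product `|ψ⟩⟨ψ|` of a two-qubit vector. -/
noncomputable def outer (ψ : Q2 → ℂ) : Matrix Q2 Q2 ℂ :=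
  Matrix.of fun i j => ψ i * star (ψ j)

/-- The state `ρ(χ, Λ_p)` obtained by applying the amplitude damping channel
with parameter `p` to the second qubit: `Σᵢ (I ⊗ Mᵢ) ρ (I ⊗ Mᵢ)†`. -/
noncomputable def ampDamp (p : ℝ) (ρ : Matrix Q2 Q2 ℂ) : Matrix Q2 Q2 ℂ :=
  ((1 : Matrix (Fin 2) (Fin 2) ℂ) ⊗ₖ M0 p) * ρ * ((1 : Matrix (Fin 2) (Fin 2) ℂ) ⊗ₖ M0 p)ᴴ +
  ((1 : Matrix (Fin 2) (Fin 2) ℂ) ⊗ₖ M1 p) * ρ * ((1 : Matrix (Fin 2) (Fin 2) ℂ) ⊗ₖ M1 p)ᴴ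

/-- The pure state `|χ⟩ = a|00⟩ + b|11⟩`. -/
noncomputable def ketChi (a b : ℝ) : Q2 → ℂ :=
  fun ij => if ij = ((0 : Fin 2), (0 : Fin 2)) then (a : ℂ)
    else if ij = ((1 : Fin 2), (1 : Fin 2)) then (b : ℂ) else 0

/-- The maximally entangled state `|Φ⁺⟩ = (|00⟩ + |11⟩)/√2`. -/
noncomputable def phiPlus : Q2 → ℂ := ketChi (Real.sqrt 2)⁻¹ (Real.sqrt 2)⁻¹

/-- The optimal transmitted state `|χ₀⟩ = (1/√(2−p))|00⟩ + √((1−p)/(2−p))|11⟩`. -/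
noncomputable def ketChi0 (p : ℝ) : Q2 → ℂ :=
  ketChi (Real.sqrt (1 / (2 - p))) (Real.sqrt ((1 - p) / (2 - p)))

/-- Reduced density matrix on the first qubit (trace out the second qubit). -/
noncomputable def trSecond (ρ : Matrix Q2 Q2 ℂ) : Matrix (Fin 2) (Fin 2) ℂ :=
  Matrix.of fun i k => ∑ j : Fin 2, ρ (i, j) (k, j)

/-- Reduced density matrix on the second qubit (trace out the first qubit). -/
noncomputable def trFirst (ρ : Matrix Q2 Q2 ℂ) : Matrix (Fin 2) (Fin 2) ℂ :=
  Matrix.of fun j l => ∑ i : Fin 2, ρ (i, j) (i, l)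

/-- A unit vector `ψ ∈ ℂ²⊗ℂ²` is maximally entangled if both reduced density
matrices of `|ψ⟩⟨ψ|` equal `I/2`. -/
def MaxEnt (ψ : Q2 → ℂ) : Prop :=
  (∑ ij : Q2, Complex.normSq (ψ ij)) = 1 ∧
  trSecond (outer ψ) = (1 / 2 : ℂ) • (1 : Matrix (Fin 2) (Fin 2) ℂ) ∧
  trFirst (outer ψ) = (1 / 2 : ℂ) • (1 : Matrix (Fin 2) (Fin 2) ℂ)

/-- The real expectation value `⟨ψ|ρ|ψ⟩`. -/
noncomputable def expectation (ψ : Q2 → ℂ) (ρ : Matrix Q2 Q2 ℂ) : ℝ :=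
  (∑ i : Q2, ∑ j : Q2, star (ψ i) * ρ i j * ψ j).re

/-- Fidelity (fully entangled fraction): `F(ρ) = sup_Ψ ⟨Ψ|ρ|Ψ⟩` over maximally
entangled unit vectors `Ψ`. -/
noncomputable def Fid (ρ : Matrix Q2 Q2 ℂ) : ℝ :=
  sSup {x : ℝ | ∃ ψ : Q2 → ℂ, MaxEnt ψ ∧ x = expectation ψ ρ}

/-- Partial transposition on the second qubit: `(ρ^Γ)_{(i,j),(k,l)} = ρ_{(i,l),(k,j)}`. -/
def ptrans (ρ : Matrix Q2 Q2 ℂ) : Matrix Q2 Q2 ℂ :=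
  Matrix.of fun ij kl => ρ (ij.1, kl.2) (kl.1, ij.2)

/-- The Verstraete–Verschelde maximum achievable fidelity under trace-preserving LOCC,
as the value of the semidefinite program
`F*(ρ) = sup { 1/2 − Tr(X ρ^Γ) : X Hermitian, 0 ≤ X ≤ I, −I/2 ≤ X^Γ ≤ I/2 }`. -/
noncomputable def FStar (ρ : Matrix Q2 Q2 ℂ) : ℝ :=
  sSup {x : ℝ | ∃ X : Matrix Q2 Q2 ℂ,
    X.IsHermitian ∧ X.PosSemidef ∧ ((1 : Matrix Q2 Q2 ℂ) - X).PosSemidef ∧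
    (ptrans X + (1 / 2 : ℂ) • (1 : Matrix Q2 Q2 ℂ)).PosSemidef ∧
    ((1 / 2 : ℂ) • (1 : Matrix Q2 Q2 ℂ) - ptrans X).PosSemidef ∧
    x = 1 / 2 - ((X * ptrans ρ).trace).re}

/-- The Pauli matrix `σ_y`. -/
noncomputable def sigY : Matrix (Fin 2) (Fin 2) ℂ := !![0, -Complex.I; Complex.I, 0]

/-- The matrix `ρ (σ_y⊗σ_y) ρ̄ (σ_y⊗σ_y)` whose eigenvalues define the concurrence. -/
noncomputable def Rmat (ρ : Matrix Q2 Q2 ℂ) : Matrix Q2 Q2 ℂ :=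
  ρ * (sigY ⊗ₖ sigY) * ρ.map (starRingEnd ℂ) * (sigY ⊗ₖ sigY)

/-- `c` is the concurrence of `ρ`: `c = max(0, λ₁ − λ₂ − λ₃ − λ₄)` where
`λ₁ ≥ λ₂ ≥ λ₃ ≥ λ₄ ≥ 0` are the square roots of the eigenvalues (with multiplicity)
of `ρ (σ_y⊗σ_y) ρ̄ (σ_y⊗σ_y)`. -/
def IsConcurrence (ρ : Matrix Q2 Q2 ℂ) (c : ℝ) : Prop :=
  ∃ lam : Fin 4 → ℝ,
    (∀ i j : Fin 4, i ≤ j → lam j ≤ lam i) ∧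
    (∀ i : Fin 4, 0 ≤ lam i) ∧
    (Rmat ρ).charpoly = ∏ i : Fin 4, (Polynomial.X - Polynomial.C ((lam i : ℂ) ^ 2)) ∧
    c = max 0 (lam 0 - lam 1 - lam 2 - lam 3)

/-- `μ` is an eigenvalue of the matrix `A`. -/
def IsEigenvalue (A : Matrix Q2 Q2 ℂ) (μ : ℂ) : Prop :=
  ∃ v : Q2 → ℂ, v ≠ 0 ∧ A *ᵥ v = μ • v

/-!
The damped state is the mixture of the unnormalised vectors `α|00⟩ + √(1-p) β|11⟩` and `√p β|10⟩`.
Write a maximally entangled `ψ` as a matrix; it is `1/√2` times a unitary, so `|ψ₁₁| = |ψ₀₀|` and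
`|ψ₁₀|² = 1/2 - |ψ₀₀|²`. The triangle inequality then bounds the expectation value by a function
affine in `|ψ₀₀|² ∈ [0, 1/2]`. Its value at `1/2` is attained at a diagonal unitary whose signs
match the amplitudes, its value at `0` at the bit flip, and `β ≤ α` makes the former the larger.
-/

section RankOne

theorem outer_eq_vecMulVec (ψ : Q2 → ℂ) : outer ψ = vecMulVec ψ (star ψ) := rfl

theorem mul_outer_mul_conjTranspose (K : Matrix Q2 Q2 ℂ) (φ : Q2 → ℂ) :
    K * outer φ * Kᴴ = outer (K *ᵥ φ) := by
  rw [outer_eq_vecMulVec, outer_eq_vecMulVec, mul_vecMulVec, vecMulVec_mul, star_mulVec]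

theorem expectation_eq_re_dotProduct (ψ : Q2 → ℂ) (ρ : Matrix Q2 Q2 ℂ) :
    expectation ψ ρ = (star ψ ⬝ᵥ ρ *ᵥ ψ).re := by
  simp only [expectation, dotProduct, mulVec, Finset.mul_sum, mul_assoc, Pi.star_apply]

theorem expectation_add (ψ : Q2 → ℂ) (ρ σ : Matrix Q2 Q2 ℂ) :
    expectation ψ (ρ + σ) = expectation ψ ρ + expectation ψ σ := by
  simp only [expectation_eq_re_dotProduct, add_mulVec, dotProduct_add, add_re]

theorem expectation_smul (t : ℂ) (ψ : Q2 → ℂ) (ρ : Matrix Q2 Q2 ℂ) :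
    expectation (t • ψ) ρ = ‖t‖ ^ 2 * expectation ψ ρ := by
  rw [expectation_eq_re_dotProduct, expectation_eq_re_dotProduct, star_smul, smul_dotProduct,
    mulVec_smul, dotProduct_smul, smul_smul, smul_eq_mul, Complex.star_def, Complex.conj_mul',
    ← ofReal_pow, re_ofReal_mul]

theorem expectation_outer (ψ φ : Q2 → ℂ) :
    expectation ψ (outer φ) = ‖star ψ ⬝ᵥ φ‖ ^ 2 := by
  have hconj : star φ ⬝ᵥ ψ = star (star ψ ⬝ᵥ φ) := star_dotProduct φ ψ
  rw [expectation_eq_re_dotProduct, outer_eq_vecMulVec, vecMulVec_mulVec, dotProduct_smul, hconj,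
    op_smul_eq_mul, Complex.star_def, Complex.mul_conj', ← ofReal_pow, ofReal_re]

end RankOne

section AmplitudeDamping

theorem kronecker_M0_mulVec_ketChi (p α β : ℝ) :
    ((1 : Matrix (Fin 2) (Fin 2) ℂ) ⊗ₖ M0 p) *ᵥ ketChi α β = ketChi α (√(1 - p) * β) := by
  ext ⟨i, j⟩
  fin_cases i <;> fin_cases j <;>
    simp [mulVec, dotProduct, M0, ketChi, Fintype.sum_prod_type]

theorem kronecker_M1_mulVec_ketChi (p α β : ℝ) :
    ((1 : Matrix (Fin 2) (Fin 2) ℂ) ⊗ₖ M1 p) *ᵥ ketChi α β =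
      Pi.single (1, 0) ((√p * β : ℝ) : ℂ) := by
  ext ⟨i, j⟩
  fin_cases i <;> fin_cases j <;>
    simp [mulVec, dotProduct, M1, ketChi, Fintype.sum_prod_type]

theorem ampDamp_outer_ketChi (p α β : ℝ) :
    ampDamp p (outer (ketChi α β)) =
      outer (ketChi α (√(1 - p) * β)) + outer (Pi.single (1, 0) ((√p * β : ℝ) : ℂ)) := by
  simp only [ampDamp, mul_outer_mul_conjTranspose, kronecker_M0_mulVec_ketChi,
    kronecker_M1_mulVec_ketChi]

end AmplitudeDamping

section MaximallyEntangled

theorem trSecond_outer_apply_self (ψ : Q2 → ℂ) (i : Fin 2) :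
    trSecond (outer ψ) i i = ((∑ j, ‖ψ (i, j)‖ ^ 2 : ℝ) : ℂ) := by
  simp [trSecond, outer, Complex.mul_conj']

theorem trFirst_outer_apply_self (ψ : Q2 → ℂ) (j : Fin 2) :
    trFirst (outer ψ) j j = ((∑ i, ‖ψ (i, j)‖ ^ 2 : ℝ) : ℂ) := by
  simp [trFirst, outer, Complex.mul_conj']

theorem trSecond_outer_vec (A : Matrix (Fin 2) (Fin 2) ℂ) :
    trSecond (outer (vec A)) = (Aᴴ * A)ᵀ := by
  ext i k
  simp [trSecond, outer, Matrix.mul_apply, mul_comm]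

theorem trFirst_outer_vec (A : Matrix (Fin 2) (Fin 2) ℂ) :
    trFirst (outer (vec A)) = A * Aᴴ := rfl

theorem sum_norm_sq_row_of_trSecond_outer {ψ : Q2 → ℂ}
    (hψ : trSecond (outer ψ) = (1 / 2 : ℂ) • 1) (i : Fin 2) :
    ∑ j, ‖ψ (i, j)‖ ^ 2 = 1 / 2 := by
  have hdiag := trSecond_outer_apply_self ψ i
  rw [hψ, Matrix.smul_apply, one_apply_eq, smul_eq_mul, mul_one] at hdiag
  exact Complex.ofReal_injective (by rw [← hdiag]; norm_num)

theorem sum_norm_sq_col_of_trFirst_outer {ψ : Q2 → ℂ}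
    (hψ : trFirst (outer ψ) = (1 / 2 : ℂ) • 1) (j : Fin 2) :
    ∑ i, ‖ψ (i, j)‖ ^ 2 = 1 / 2 := by
  have hdiag := trFirst_outer_apply_self ψ j
  rw [hψ, Matrix.smul_apply, one_apply_eq, smul_eq_mul, mul_one] at hdiag
  exact Complex.ofReal_injective (by rw [← hdiag]; norm_num)

theorem MaxEnt.norm_sq_one_zero {ψ : Q2 → ℂ} (hψ : MaxEnt ψ) :
    ‖ψ (1, 0)‖ ^ 2 = 1 / 2 - ‖ψ (0, 0)‖ ^ 2 := by
  have hcol := sum_norm_sq_col_of_trFirst_outer hψ.2.2 0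
  rw [Fin.sum_univ_two] at hcol
  linarith

theorem MaxEnt.norm_one_one {ψ : Q2 → ℂ} (hψ : MaxEnt ψ) : ‖ψ (1, 1)‖ = ‖ψ (0, 0)‖ := by
  have hrow := sum_norm_sq_row_of_trSecond_outer hψ.2.1 1
  rw [Fin.sum_univ_two, hψ.norm_sq_one_zero] at hrow
  exact (sq_eq_sq₀ (norm_nonneg _) (norm_nonneg _)).1 (by linarith)

/-- The vector `(I ⊗ U)|Φ⁺⟩` of a matrix `U`, which is maximally entangled when `U` is unitary.
Mathlib's `vec` stacks columns, so its coordinate at `|ij⟩` is `U j i / √2`. -/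
noncomputable def maxEntKet (U : Matrix (Fin 2) (Fin 2) ℂ) : Q2 → ℂ :=
  (√2 : ℂ)⁻¹ • vec U

theorem maxEnt_maxEntKet {U : Matrix (Fin 2) (Fin 2) ℂ} (hU : U ∈ unitaryGroup (Fin 2) ℂ) :
    MaxEnt (maxEntKet U) := by
  have hscale : (√2 : ℂ)⁻¹ * star (√2 : ℂ)⁻¹ = 1 / 2 := by
    rw [star_inv₀, Complex.star_def, conj_ofReal, ← mul_inv, ← ofReal_mul,
      Real.mul_self_sqrt zero_le_two, ofReal_ofNat, one_div]
  have hsecond : trSecond (outer (maxEntKet U)) = (1 / 2 : ℂ) • 1 := by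
    rw [maxEntKet, ← vec_smul, trSecond_outer_vec, conjTranspose_smul, Matrix.mul_smul,
      Matrix.smul_mul, smul_smul, hscale, ← star_eq_conjTranspose, mem_unitaryGroup_iff'.1 hU,
      transpose_smul, transpose_one]
  have hfirst : trFirst (outer (maxEntKet U)) = (1 / 2 : ℂ) • 1 := by
    rw [maxEntKet, ← vec_smul, trFirst_outer_vec, conjTranspose_smul, Matrix.smul_mul,
      Matrix.mul_smul, smul_smul, hscale, ← star_eq_conjTranspose, mem_unitaryGroup_iff.1 hU]
  refine ⟨?_, hsecond, hfirst⟩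
  simp only [Complex.normSq_eq_norm_sq, Fintype.sum_prod_type,
    sum_norm_sq_row_of_trSecond_outer hsecond]
  norm_num

theorem expectation_maxEntKet (U : Matrix (Fin 2) (Fin 2) ℂ) (ρ : Matrix Q2 Q2 ℂ) :
    expectation (maxEntKet U) ρ = expectation (vec U) ρ / 2 := by
  have hnorm : ‖(√2 : ℂ)⁻¹‖ ^ 2 = 1 / 2 := by simp
  rw [maxEntKet, expectation_smul, hnorm, one_div_mul_eq_div]

theorem diagonal_mem_unitaryGroup {n : Type*} [Fintype n] [DecidableEq n] {d : n → ℂ}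
    (hd : ∀ i, ‖d i‖ = 1) : diagonal d ∈ unitaryGroup n ℂ := by
  rw [mem_unitaryGroup_iff, star_eq_conjTranspose, diagonal_conjTranspose, diagonal_mul_diagonal,
    ← diagonal_one]
  congr 1
  ext i
  simp [Complex.mul_conj', hd i]

theorem bitFlip_mem_unitaryGroup : !![0, 1; 1, 0] ∈ unitaryGroup (Fin 2) ℂ := by
  rw [mem_unitaryGroup_iff, star_eq_conjTranspose]
  ext i j
  fin_cases i <;> fin_cases j <;> simp [Matrix.mul_apply]

end MaximallyEntangled

section Fidelity

theorem dotProduct_ketChi (v : Q2 → ℂ) (a b : ℝ) :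
    v ⬝ᵥ ketChi a b = v (0, 0) * a + v (1, 1) * b := by
  simp [dotProduct, ketChi, Fintype.sum_prod_type]

theorem expectation_outer_ketChi_add_outer_single (ψ : Q2 → ℂ) (a b : ℝ) (c : ℂ) :
    expectation ψ (outer (ketChi a b) + outer (Pi.single (1, 0) c)) =
      ‖star (ψ (0, 0)) * a + star (ψ (1, 1)) * b‖ ^ 2 + ‖ψ (1, 0)‖ ^ 2 * ‖c‖ ^ 2 := by
  simp only [expectation_add, expectation_outer, dotProduct_ketChi, dotProduct_single,
    Pi.star_apply, norm_mul, norm_star, mul_pow]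

theorem MaxEnt.expectation_le {ψ : Q2 → ℂ} (hψ : MaxEnt ψ) (a b : ℝ) (c : ℂ) :
    expectation ψ (outer (ketChi a b) + outer (Pi.single (1, 0) c)) ≤
      max ((|a| + |b|) ^ 2) (‖c‖ ^ 2) / 2 := by
  have htriangle : ‖star (ψ (0, 0)) * a + star (ψ (1, 1)) * b‖ ≤ ‖ψ (0, 0)‖ * (|a| + |b|) :=
    (norm_add_le _ _).trans_eq <| by
      simp only [norm_mul, norm_star, norm_real, Real.norm_eq_abs, hψ.norm_one_one, mul_add]
  calc
    expectation ψ (outer (ketChi a b) + outer (Pi.single (1, 0) c))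
      = ‖star (ψ (0, 0)) * a + star (ψ (1, 1)) * b‖ ^ 2 + ‖ψ (1, 0)‖ ^ 2 * ‖c‖ ^ 2 :=
        expectation_outer_ketChi_add_outer_single ψ a b c
    _ ≤ (‖ψ (0, 0)‖ * (|a| + |b|)) ^ 2 + ‖ψ (1, 0)‖ ^ 2 * ‖c‖ ^ 2 := by gcongr
    _ = ‖ψ (0, 0)‖ ^ 2 * (|a| + |b|) ^ 2 + ‖ψ (1, 0)‖ ^ 2 * ‖c‖ ^ 2 := by rw [mul_pow]
    _ ≤ ‖ψ (0, 0)‖ ^ 2 * max ((|a| + |b|) ^ 2) (‖c‖ ^ 2) +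
          ‖ψ (1, 0)‖ ^ 2 * max ((|a| + |b|) ^ 2) (‖c‖ ^ 2) := by
        gcongr
        · exact le_max_left _ _
        · exact le_max_right _ _
    _ = max ((|a| + |b|) ^ 2) (‖c‖ ^ 2) / 2 := by rw [hψ.norm_sq_one_zero]; ring

theorem exists_norm_eq_one_star_mul_eq_abs (x : ℝ) : ∃ u : ℂ, ‖u‖ = 1 ∧ star u * x = |x| := by
  rcases abs_choice x with h | h
  · exact ⟨1, by simp [h]⟩
  · exact ⟨-1, by simp [h]⟩

theorem exists_maxEnt_expectation_eq_abs_add_abs_sq (a b : ℝ) (c : ℂ) :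
    ∃ ψ, MaxEnt ψ ∧ expectation ψ (outer (ketChi a b) + outer (Pi.single (1, 0) c)) =
      (|a| + |b|) ^ 2 / 2 := by
  obtain ⟨u, hu, hua⟩ := exists_norm_eq_one_star_mul_eq_abs a
  obtain ⟨v, hv, hvb⟩ := exists_norm_eq_one_star_mul_eq_abs b
  have hunitary : diagonal ![u, v] ∈ unitaryGroup (Fin 2) ℂ :=
    diagonal_mem_unitaryGroup (Fin.forall_fin_two.2 ⟨hu, hv⟩)
  refine ⟨_, maxEnt_maxEntKet hunitary, ?_⟩
  have hoverlap : ‖star u * a + star v * b‖ ^ 2 = (|a| + |b|) ^ 2 := by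
    rw [hua, hvb, ← ofReal_add, norm_real, Real.norm_eq_abs, sq_abs]
  rw [expectation_maxEntKet, expectation_outer_ketChi_add_outer_single]
  simpa using hoverlap

theorem exists_maxEnt_expectation_eq_norm_sq (a b : ℝ) (c : ℂ) :
    ∃ ψ, MaxEnt ψ ∧ expectation ψ (outer (ketChi a b) + outer (Pi.single (1, 0) c)) =
      ‖c‖ ^ 2 / 2 := by
  refine ⟨_, maxEnt_maxEntKet bitFlip_mem_unitaryGroup, ?_⟩
  rw [expectation_maxEntKet, expectation_outer_ketChi_add_outer_single]
  simp

theorem Fid_outer_ketChi_add_outer_single (a b : ℝ) (c : ℂ) :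
    Fid (outer (ketChi a b) + outer (Pi.single (1, 0) c)) =
      max ((|a| + |b|) ^ 2) (‖c‖ ^ 2) / 2 := by
  refine IsGreatest.csSup_eq ⟨?_, ?_⟩
  · rcases max_choice ((|a| + |b|) ^ 2) (‖c‖ ^ 2) with hmax | hmax <;> rw [hmax]
    · obtain ⟨ψ, hψ, hval⟩ := exists_maxEnt_expectation_eq_abs_add_abs_sq a b c
      exact ⟨ψ, hψ, hval.symm⟩
    · obtain ⟨ψ, hψ, hval⟩ := exists_maxEnt_expectation_eq_norm_sq a b c
      exact ⟨ψ, hψ, hval.symm⟩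
  · rintro _ ⟨ψ, hψ, rfl⟩
    exact hψ.expectation_le a b c

theorem fidelity_ampDamp_chi_general {p α β : ℝ} (hp0 : 0 ≤ p) (hp1 : p ≤ 1)
    (hnorm : α ^ 2 + β ^ 2 = 1) :
    Fid (ampDamp p (outer (ketChi α β))) =
      max (1 + 2 * |α| * |β| * √(1 - p) - p * β ^ 2) (p * β ^ 2) / 2 := by
  have hcoherent : (|α| + |√(1 - p) * β|) ^ 2 = 1 + 2 * |α| * |β| * √(1 - p) - p * β ^ 2 := by
    rw [abs_mul, abs_of_nonneg (Real.sqrt_nonneg _)]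
    linear_combination sq_abs α + (1 - p) * sq_abs β + hnorm +
      |β| ^ 2 * Real.sq_sqrt (sub_nonneg.2 hp1)
  have hdamped : ‖((√p * β : ℝ) : ℂ)‖ ^ 2 = p * β ^ 2 := by
    rw [norm_real, Real.norm_eq_abs, sq_abs, mul_pow, Real.sq_sqrt hp0]
  rw [ampDamp_outer_ketChi, Fid_outer_ketChi_add_outer_single, hcoherent, hdamped]

theorem damped_weight_le_coherent_weight {p α β : ℝ} (hp1 : p ≤ 1) (hβα : |β| ≤ |α|)
    (hnorm : α ^ 2 + β ^ 2 = 1) :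
    p * β ^ 2 ≤ 1 + 2 * |α| * |β| * √(1 - p) - p * β ^ 2 := by
  have hsq : β ^ 2 ≤ α ^ 2 := sq_le_sq.2 hβα
  have hdamped : p * β ^ 2 ≤ β ^ 2 := mul_le_of_le_one_left (sq_nonneg β) hp1
  have hcross : 0 ≤ 2 * |α| * |β| * √(1 - p) := by positivity
  linarith

end Fidelity

/-- For `0 < p < 1` and `α ≥ β > 0` with `α² + β² = 1`, the fidelity of
the state obtained by sending the second qubit of `α|00⟩ + β|11⟩` through the
amplitude damping channel `Λ_p` equals `(1 + 2αβ√(1−p) − pβ²)/2`. -/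
theorem fidelity_ampDamp_chi (p α β : ℝ) (hp0 : 0 < p) (hp1 : p < 1)
    (hba : β ≤ α) (hb : 0 < β) (hnorm : α ^ 2 + β ^ 2 = 1) :
    Fid (ampDamp p (outer (ketChi α β))) =
      (1 + 2 * α * β * Real.sqrt (1 - p) - p * β ^ 2) / 2 := by
  have hβα : |β| ≤ |α| := abs_le_abs_of_nonneg hb.le hba
  rw [fidelity_ampDamp_chi_general hp0.le hp1.le hnorm,
    max_eq_left (damped_weight_le_coherent_weight hp1.le hβα hnorm),
    abs_of_pos hb, abs_of_pos (hb.trans_le hba)]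
end

section
/- Let 0 < p < 1 and let α, β be real numbers with α ≥ β > 0 and α² + β² = 1. Then the concurrence of the state ρ(χ(α), Λ_p) obtained by sending the second qubit of |χ(α)⟩ = α|00⟩ + β|11⟩ through the amplitude damping channel Λ_p equals C(ρ(χ(α), Λ_p)) = 2αβ√(1−p). -/
open Matrix Complex
open scoped Kronecker ComplexOrder

/-!
A density matrix `ρ = V Vᴴ` satisfies `R(ρ) = V · (Vᴴ S V̄ Vᵀ S)` with `S = σ_y ⊗ σ_y`, so the
nonzero eigenvalues of `R(ρ)` are those of `τᴴ τ` for the small matrix `τ = Vᵀ S V` (Wootters).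
Writing a pure state as `vec Ψ` with `Ψ` a `2 × 2` matrix, a channel on the second qubit with Kraus
operators `Kₖ` turns it into `V Vᴴ` with columns `vec (Kₖ Ψ)`. Since
`vec A ⬝ S vec B = -tr (A · adj B)`, the matrix `Ψ` factors out: `τₖₗ = -det Ψ · tr (Kₖ · adj Kₗ)`.
For amplitude damping only `tr (M₀ · adj M₀) = 2 det M₀ = 2 √(1 - p)` survives, so the only possibly
nonzero eigenvalue of `R(ρ)` is `4 (1 - p) |det Ψ|²`.
-/

open Polynomial in
theorem eq_of_prod_X_sub_C_sq_eq {n : ℕ} {lam mu : Fin n → ℝ}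
    (hlam : Antitone lam) (hlam0 : ∀ i, 0 ≤ lam i) (hmu : Antitone mu) (hmu0 : ∀ i, 0 ≤ mu i)
    (h : ∏ i, (X - C ((lam i : ℂ) ^ 2)) = ∏ i, (X - C ((mu i : ℂ) ^ 2))) :
    lam = mu := by
  have roots_eq (f : Fin n → ℂ) : (∏ i, (X - C (f i))).roots = (List.ofFn f : Multiset ℂ) := by
    rw [← Fin.univ_val_map, ← roots_multiset_prod_X_sub_C (Finset.univ.val.map f),
      Multiset.map_map]
    rfl
  have sqrt_re_sq {f : Fin n → ℝ} (hf : ∀ i, 0 ≤ f i) :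
      (List.ofFn fun i => (f i : ℂ) ^ 2).map (fun z => √z.re) = List.ofFn f := by
    rw [List.map_ofFn]
    congr 1
    ext i
    simp [← ofReal_pow, Real.sqrt_sq (hf i)]
  have perm_sq : (List.ofFn fun i => (lam i : ℂ) ^ 2).Perm (List.ofFn fun i => (mu i : ℂ) ^ 2) := by
    rw [← Multiset.coe_eq_coe, ← roots_eq, ← roots_eq, h]
  have perm : (List.ofFn lam).Perm (List.ofFn mu) := by
    simpa only [sqrt_re_sq hlam0, sqrt_re_sq hmu0] using perm_sq.map fun z => √z.re
  exact List.ofFn_injective (perm.eq_of_sortedGE hlam.sortedGE_ofFn hmu.sortedGE_ofFn)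

theorem IsConcurrence.unique {ρ : Matrix Q2 Q2 ℂ} {c d : ℝ}
    (hc : IsConcurrence ρ c) (hd : IsConcurrence ρ d) : c = d := by
  obtain ⟨lam, hlam, hlam0, hlamR, rfl⟩ := hc
  obtain ⟨mu, hmu, hmu0, hmuR, rfl⟩ := hd
  rw [eq_of_prod_X_sub_C_sq_eq hlam hlam0 hmu hmu0 (hlamR.symm.trans hmuR)]

open Polynomial in
theorem isConcurrence_sqrt_of_charpoly_eq {ρ : Matrix Q2 Q2 ℂ} {x : ℝ} (hx : 0 ≤ x)
    (h : (Rmat ρ).charpoly = X ^ 3 * (X - C (x : ℂ))) : IsConcurrence ρ √x := by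
  refine ⟨![√x, 0, 0, 0], ?_, ?_, ?_, ?_⟩
  · intro i j hij
    fin_cases i <;> fin_cases j <;> simp_all
  · intro i
    fin_cases i <;> simp
  · have sq : (√x : ℂ) ^ 2 = x := mod_cast Real.sq_sqrt hx
    rw [h, ← sq]
    simp only [Fin.prod_univ_four, cons_val, ofReal_zero, C_0, C_pow]
    ring
  · simp

theorem isHermitian_sigY : sigY.IsHermitian := by
  ext i j
  fin_cases i <;> fin_cases j <;> simp [sigY]

/-- Wootters' matrix `τ = Vᵀ (σ_y ⊗ σ_y) V` of the columns `vₖ` of `V`; up to complex conjugation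
its entries are the overlaps of the `vₖ` with the spin-flipped vectors `(σ_y ⊗ σ_y) v̄ₗ`. -/
noncomputable def woottersMatrix {m : Type*} (V : Matrix Q2 m ℂ) : Matrix m m ℂ :=
  Vᵀ * (sigY ⊗ₖ sigY) * V

theorem conjTranspose_woottersMatrix {m : Type*} (V : Matrix Q2 m ℂ) :
    (woottersMatrix V)ᴴ = Vᴴ * (sigY ⊗ₖ sigY) * V.map (starRingEnd ℂ) := by
  rw [woottersMatrix, conjTranspose_mul, conjTranspose_mul, conjTranspose_kronecker,
    isHermitian_sigY.eq, ← Matrix.mul_assoc]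
  rfl

theorem Rmat_mul_conjTranspose {m : Type*} [Fintype m] (V : Matrix Q2 m ℂ) :
    Rmat (V * Vᴴ) =
      V * (Vᴴ * (sigY ⊗ₖ sigY) * V.map (starRingEnd ℂ) * (Vᵀ * (sigY ⊗ₖ sigY))) := by
  have conj_eq : (V * Vᴴ).map (starRingEnd ℂ) = V.map (starRingEnd ℂ) * Vᵀ := by
    ext i j
    simp [Matrix.mul_apply]
  simp only [Rmat, conj_eq, Matrix.mul_assoc]

open Polynomial in
theorem charpoly_Rmat_mul_conjTranspose {m : Type*} [Fintype m] [DecidableEq m]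
    (V : Matrix Q2 m ℂ) :
    X ^ Fintype.card m * (Rmat (V * Vᴴ)).charpoly =
      X ^ 4 * ((woottersMatrix V)ᴴ * woottersMatrix V).charpoly := by
  rw [Rmat_mul_conjTranspose, charpoly_mul_comm', conjTranspose_woottersMatrix, woottersMatrix]
  simp [Matrix.mul_assoc]

/-- The matrix whose columns are the images `(I ⊗ Kₖ) vec Ψ = vec (Kₖ Ψ)` of the two-qubit vector
`vec Ψ` under Kraus operators `Kₖ` acting on the second qubit. Since `vec Ψ (i, j) = Ψ j i`, the
second qubit indexes the rows of `Ψ`. -/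
def krausColumns {m : Type*} (K : m → Matrix (Fin 2) (Fin 2) ℂ) (Ψ : Matrix (Fin 2) (Fin 2) ℂ) :
    Matrix Q2 m ℂ :=
  Matrix.of fun i k => vec (K k * Ψ) i

theorem kronecker_mul_outer_vec (K Ψ : Matrix (Fin 2) (Fin 2) ℂ) :
    ((1 : Matrix (Fin 2) (Fin 2) ℂ) ⊗ₖ K) * outer (vec Ψ) *
      ((1 : Matrix (Fin 2) (Fin 2) ℂ) ⊗ₖ K)ᴴ = outer (vec (K * Ψ)) := by
  have outer_eq (ψ : Q2 → ℂ) : outer ψ = vecMulVec ψ (star ψ) := rfl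
  rw [outer_eq, outer_eq, mul_vecMulVec, vecMulVec_mul, ← star_mulVec, ← vec_mul_eq_mulVec]

theorem krausColumns_mul_conjTranspose {m : Type*} [Fintype m]
    (K : m → Matrix (Fin 2) (Fin 2) ℂ) (Ψ : Matrix (Fin 2) (Fin 2) ℂ) :
    krausColumns K Ψ * (krausColumns K Ψ)ᴴ = ∑ k, outer (vec (K k * Ψ)) := by
  ext i j
  simp [krausColumns, outer, Matrix.mul_apply, Matrix.sum_apply]

theorem ampDamp_outer_vec (p : ℝ) (Ψ : Matrix (Fin 2) (Fin 2) ℂ) :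
    ampDamp p (outer (vec Ψ)) =
      krausColumns ![M0 p, M1 p] Ψ * (krausColumns ![M0 p, M1 p] Ψ)ᴴ := by
  simp [ampDamp, kronecker_mul_outer_vec, krausColumns_mul_conjTranspose]

theorem sigY_mul_mul_transpose (A : Matrix (Fin 2) (Fin 2) ℂ) :
    sigY * A * sigYᵀ = -A.adjugateᵀ := by
  rw [eta_fin_two A]
  ext i j
  fin_cases i <;> fin_cases j <;>
    simp [sigY, adjugate_fin_two_of, vecMul, dotProduct, mul_right_comm I]

theorem vec_dotProduct_sigY_kronecker_mulVec_vec (A B : Matrix (Fin 2) (Fin 2) ℂ) :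
    vec A ⬝ᵥ (sigY ⊗ₖ sigY) *ᵥ vec B = -(A * B.adjugate).trace := by
  rw [kronecker_mulVec_vec, sigY_mul_mul_transpose, vec_dotProduct_vec, Matrix.mul_neg, trace_neg,
    ← transpose_mul, trace_transpose, trace_mul_comm]

theorem woottersMatrix_krausColumns_apply {m : Type*} (K : m → Matrix (Fin 2) (Fin 2) ℂ)
    (Ψ : Matrix (Fin 2) (Fin 2) ℂ) (k l : m) :
    woottersMatrix (krausColumns K Ψ) k l = -(Ψ.det * (K k * (K l).adjugate).trace) := by
  calc woottersMatrix (krausColumns K Ψ) k l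
      = vec (K k * Ψ) ⬝ᵥ (sigY ⊗ₖ sigY) *ᵥ vec (K l * Ψ) := by
        rw [woottersMatrix, Matrix.mul_assoc]
        rfl
    _ = -(K k * (Ψ * Ψ.adjugate) * (K l).adjugate).trace := by
        rw [vec_dotProduct_sigY_kronecker_mulVec_vec, adjugate_mul_distrib]
        simp only [Matrix.mul_assoc]
    _ = -(Ψ.det * (K k * (K l).adjugate).trace) := by
        simp [mul_adjugate]

theorem woottersMatrix_krausColumns_ampDamp (p : ℝ) (Ψ : Matrix (Fin 2) (Fin 2) ℂ) :
    woottersMatrix (krausColumns ![M0 p, M1 p] Ψ) = diagonal ![-(2 * √(1 - p) * Ψ.det), 0] := by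
  ext k l
  rw [woottersMatrix_krausColumns_apply]
  fin_cases k <;> fin_cases l <;>
    simp [M0, M1, adjugate_fin_two_of, trace_fin_two, ← two_mul, mul_comm Ψ.det]

open Polynomial in
theorem charpoly_Rmat_ampDamp_outer_vec {p : ℝ} (hp : p ≤ 1) (Ψ : Matrix (Fin 2) (Fin 2) ℂ) :
    (Rmat (ampDamp p (outer (vec Ψ)))).charpoly =
      X ^ 3 * (X - C ((4 * (1 - p) * ‖Ψ.det‖ ^ 2 : ℝ) : ℂ)) := by
  have eigenvalue : star (-(2 * √(1 - p) * Ψ.det)) * -(2 * √(1 - p) * Ψ.det) =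
      ((4 * (1 - p) * ‖Ψ.det‖ ^ 2 : ℝ) : ℂ) := by
    have norm_sq : ‖2 * √(1 - p) * Ψ.det‖ ^ 2 = 4 * (1 - p) * ‖Ψ.det‖ ^ 2 := by
      simp only [norm_mul, norm_real, norm_ofNat, Real.norm_eq_abs, mul_pow, sq_abs,
        Real.sq_sqrt (sub_nonneg.mpr hp)]
      norm_num
    rw [← norm_sq, star_neg, neg_mul_neg, ofReal_pow]
    exact conj_mul' _
  have h := charpoly_Rmat_mul_conjTranspose (krausColumns ![M0 p, M1 p] Ψ)
  rw [← ampDamp_outer_vec, woottersMatrix_krausColumns_ampDamp, diagonal_conjTranspose,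
    diagonal_mul_diagonal, charpoly_diagonal, Fin.prod_univ_two, Fintype.card_fin] at h
  apply mul_left_cancel₀ (pow_ne_zero 2 X_ne_zero)
  rw [h, ← eigenvalue]
  simp only [Pi.star_apply, cons_val, star_zero, mul_zero, C_0, sub_zero]
  ring

theorem concurrence_ampDamp_chi_general {p : ℝ} (hp : p ∈ Set.Icc 0 1)
    (Ψ : Matrix (Fin 2) (Fin 2) ℂ) (c : ℝ) :
    IsConcurrence (ampDamp p (outer (vec Ψ))) c ↔ c = 2 * ‖Ψ.det‖ * √(1 - p) := by
  have hC : IsConcurrence (ampDamp p (outer (vec Ψ))) (2 * ‖Ψ.det‖ * √(1 - p)) := by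
    have hp1 : 0 ≤ 1 - p := sub_nonneg.mpr hp.2
    convert isConcurrence_sqrt_of_charpoly_eq (by positivity)
      (charpoly_Rmat_ampDamp_outer_vec hp.2 Ψ) using 1
    rw [show 4 * (1 - p) * ‖Ψ.det‖ ^ 2 = (2 * ‖Ψ.det‖) ^ 2 * (1 - p) by ring,
      Real.sqrt_mul (by positivity), Real.sqrt_sq (by positivity)]
  exact ⟨fun hc => hc.unique hC, fun hc => hc ▸ hC⟩

theorem ketChi_eq_vec_diagonal (a b : ℝ) : ketChi a b = vec (diagonal ![(a : ℂ), (b : ℂ)]) := by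
  ext ⟨i, j⟩
  fin_cases i <;> fin_cases j <;> simp [ketChi]

/-- For `0 < p < 1` and `α ≥ β > 0` with `α² + β² = 1`, the concurrence of
the state obtained by sending the second qubit of `α|00⟩ + β|11⟩` through the
amplitude damping channel `Λ_p` equals `2αβ√(1−p)`. -/
theorem concurrence_ampDamp_chi (p α β : ℝ) (hp0 : 0 < p) (hp1 : p < 1)
    (hba : β ≤ α) (hb : 0 < β) (hnorm : α ^ 2 + β ^ 2 = 1) :
    ∀ c : ℝ, IsConcurrence (ampDamp p (outer (ketChi α β))) c →
      c = 2 * α * β * Real.sqrt (1 - p) := by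
  intro c hc
  have hdet : ‖(diagonal ![(α : ℂ), (β : ℂ)]).det‖ = α * β := by
    simp [det_diagonal, abs_of_pos, hb, hb.trans_le hba]
  rw [ketChi_eq_vec_diagonal, concurrence_ampDamp_chi_general ⟨hp0.le, hp1.le⟩, hdet] at hc
  rw [hc, mul_assoc 2 α β]
end
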